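/- Let A ⊆ ℤ^m with a fixed partition of {1,…,m} into p blocks, and define ρ : ℤ^m → ℕ^{2m} by ρ(e₁,…,e_m) = (max{e₁,0},…,max{e_m,0}, max{−e₁,0},…,max{−e_m,0}). Let B = ρ(A) ∪ {ē₁,…,ē_m} ⊆ ℕ^{2m}, where ē_i is the 2m-tuple with 1 in coordinates i and m+i and 0 elsewhere. Then φ_A(t₁,…,t_p) = ω_B(t₁,…,t_p), where ω_B is the dimension polynomial of B associated with the partition {1,…,2m} = Δ′₁ ∪ … ∪ Δ′_p, Δ′_i = Δ_i ∪ {m+k : k ∈ Δ_i}. -/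

import Mathlib

/-- The order of `a` with respect to the `k`-th block of the partition `π` (ℕ-valued tuples). -/
def ordBlockN {ι : Type*} [Fintype ι] {p : ℕ} (π : ι → Fin p) (k : Fin p) (a : ι → ℕ) : ℕ :=
  ∑ i ∈ Finset.univ.filter (fun i => π i = k), a i

/-- `V_E = {v : no e ∈ E satisfies e ≤ v componentwise}`. -/
def VSet {ι : Type*} (E : Set (ι → ℕ)) : Set (ι → ℕ) :=
  {v | ∀ e ∈ E, ¬ e ≤ v}

/-- `V_E(r₁,…,r_p)`. -/
def VSetBd {ι : Type*} [Fintype ι] {p : ℕ} (π : ι → Fin p) (E : Set (ι → ℕ))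
    (r : Fin p → ℕ) : Set (ι → ℕ) :=
  {v ∈ VSet E | ∀ k, ordBlockN π k v ≤ r k}

/-- The order of `a ∈ ℤ^m` with respect to the `k`-th block of the partition `π`. -/
def ordBlockZ {m p : ℕ} (π : Fin m → Fin p) (k : Fin p) (a : Fin m → ℤ) : ℕ :=
  ∑ i ∈ Finset.univ.filter (fun i => π i = k), (a i).natAbs

/-- `e ⊴ e'` iff `e` and `e'` lie in a common orthant of `ℤ^m` and `|e_i| ≤ |e'_i|` for all `i`. -/
def orthLE {m : ℕ} (e e' : Fin m → ℤ) : Prop :=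
  ∀ i, 0 ≤ e i * e' i ∧ |e i| ≤ |e' i|

/-- `W_A = {w ∈ ℤ^m : no a ∈ A satisfies a ⊴ w}`. -/
def WSet {m : ℕ} (A : Set (Fin m → ℤ)) : Set (Fin m → ℤ) :=
  {w | ∀ a ∈ A, ¬ orthLE a w}

/-- `W_A(r₁,…,r_p)`. -/
def WSetBd {m p : ℕ} (π : Fin m → Fin p) (A : Set (Fin m → ℤ)) (r : Fin p → ℕ) :
    Set (Fin m → ℤ) :=
  {w ∈ WSet A | ∀ k, ordBlockZ π k w ≤ r k}

/-- The map `ρ : ℤ^m → ℕ^{2m}`,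
`ρ(e₁,…,e_m) = (max{e₁,0},…,max{e_m,0}, max{−e₁,0},…,max{−e_m,0})`
(here `ℕ^{2m}` is modelled as `Fin m ⊕ Fin m → ℕ`). -/
def rhoMap {m : ℕ} (e : Fin m → ℤ) : (Fin m ⊕ Fin m) → ℕ :=
  Sum.elim (fun i => (e i).toNat) (fun i => (-(e i)).toNat)

/-- The `2m`-tuple `ē_i` with `1` in coordinates `i` and `m+i` and `0` elsewhere. -/
def eBar {m : ℕ} (i : Fin m) : (Fin m ⊕ Fin m) → ℕ :=
  fun j => if j = Sum.inl i ∨ j = Sum.inr i then 1 else 0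

theorem aux_le {m : ℕ} (a w : Fin m → ℤ) : rhoMap a ≤ rhoMap w ↔ orthLE a w := by
  have key : ∀ x y : ℤ, (x.toNat ≤ y.toNat ∧ (-x).toNat ≤ (-y).toNat) ↔
      (0 ≤ x * y ∧ |x| ≤ |y|) := by
    intro x y
    rw [Int.abs_eq_natAbs, Int.abs_eq_natAbs]
    constructor
    · rintro ⟨h1, h2⟩
      constructor
      · rcases le_total 0 x with hx | hx
        · rcases le_total 0 y with hy | hy
          · exact mul_nonneg hx hy
          · have : x = 0 := by omega
            simp [this]
        · rcases le_total 0 y with hy | hy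
          · have : x = 0 := by omega
            simp [this]
          · exact mul_nonneg_of_nonpos_of_nonpos hx hy
      · omega
    · rintro ⟨h1, h2⟩
      rcases lt_trichotomy x 0 with hx | hx | hx
      · have : y ≤ 0 := by nlinarith
        omega
      · omega
      · have : 0 ≤ y := by nlinarith
        omega
  constructor
  · intro h i
    exact (key _ _).1 ⟨h (Sum.inl i), h (Sum.inr i)⟩
  · intro h j
    rcases j with i | i
    · exact ((key _ _).2 (h i)).1
    · exact ((key _ _).2 (h i)).2

theorem aux_eBar {m : ℕ} (i : Fin m) (v : Fin m ⊕ Fin m → ℕ) :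
    eBar i ≤ v ↔ 1 ≤ v (Sum.inl i) ∧ 1 ≤ v (Sum.inr i) := by
  constructor
  · intro h
    have h1 := h (Sum.inl i)
    have h2 := h (Sum.inr i)
    simp [eBar] at h1 h2
    omega
  · rintro ⟨h1, h2⟩ j
    unfold eBar
    split_ifs with h
    · rcases h with rfl | rfl <;> assumption
    · exact Nat.zero_le _

theorem aux_ord {m p : ℕ} (π : Fin m → Fin p) (k : Fin p) (w : Fin m → ℤ) :
    ordBlockN (Sum.elim π π) k (rhoMap w) = ordBlockZ π k w := by
  unfold ordBlockN ordBlockZ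
  rw [Finset.sum_filter, Finset.sum_filter, Fintype.sum_sum_type, ← Finset.sum_add_distrib]
  refine Finset.sum_congr rfl fun i _ => ?_
  simp only [Sum.elim_inl, Sum.elim_inr, rhoMap]
  by_cases h : π i = k
  · simp only [h, if_true]
    omega
  · simp [h]

theorem aux_inj {m : ℕ} : Function.Injective (rhoMap (m := m)) := by
  intro a b h
  funext i
  have h1 := congrFun h (Sum.inl i)
  have h2 := congrFun h (Sum.inr i)
  simp only [Sum.elim_inl, Sum.elim_inr, rhoMap] at h1 h2
  omega

theorem aux_image {m p : ℕ} (π : Fin m → Fin p) (A : Set (Fin m → ℤ)) (r : Fin p → ℕ) :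
    VSetBd (Sum.elim π π) ((rhoMap '' A) ∪ Set.range eBar) r = rhoMap '' (WSetBd π A r) := by
  ext v
  constructor
  · rintro ⟨hv, hr⟩
    have hvw : rhoMap (fun i => (v (Sum.inl i) : ℤ) - v (Sum.inr i)) = v := by
      funext j
      have hz : ∀ i, v (Sum.inl i) = 0 ∨ v (Sum.inr i) = 0 := by
        intro i
        have := hv (eBar i) (Or.inr ⟨i, rfl⟩)
        rw [aux_eBar] at this
        omega
      rcases j with i | i <;> have := hz i <;>
        simp only [Sum.elim_inl, Sum.elim_inr, rhoMap] <;> omega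
    refine ⟨_, ⟨?_, ?_⟩, hvw⟩
    · intro a ha h
      rw [← aux_le, hvw] at h
      exact hv _ (Or.inl ⟨a, ha, rfl⟩) h
    · intro k
      rw [← aux_ord, hvw]
      exact hr k
  · rintro ⟨w, ⟨hw, hr⟩, rfl⟩
    refine ⟨?_, ?_⟩
    · rintro e (⟨a, ha, rfl⟩ | ⟨i, rfl⟩) h
      · exact hw a ha ((aux_le _ _).1 h)
      · rw [aux_eBar] at h
        simp only [Sum.elim_inl, Sum.elim_inr, rhoMap] at h
        omega
    · intro k
      rw [aux_ord]
      exact hr k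

/-- **Reduction of `ℤ^m`-dimension polynomials to `ℕ^{2m}`-dimension polynomials.**
Let `A ⊆ ℤ^m` with a partition of `{1,…,m}` into `p` blocks, and let
`B = ρ(A) ∪ {ē₁,…,ē_m} ⊆ ℕ^{2m}`.  Then `φ_A = ω_B`, where `ω_B` is computed with respect
to the doubled partition `Δ′_i = Δ_i ∪ {m+k : k ∈ Δ_i}` (encoded by `Sum.elim π π`):
any polynomial eventually counting `W_A(r̄)` equals any polynomial eventually counting
`V_B(r̄)`. -/
theorem dimension_polynomial_int_eq_dimension_polynomial_nat {m p : ℕ} (hm : 0 < m)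
    (hp : 0 < p) (π : Fin m → Fin p) (hπ : Function.Surjective π) (A : Set (Fin m → ℤ))
    (φ ω : MvPolynomial (Fin p) ℚ)
    (hφ : ∃ s : Fin p → ℕ, ∀ r : Fin p → ℕ, (∀ i, s i ≤ r i) →
      MvPolynomial.eval (fun i => (r i : ℚ)) φ = ((WSetBd π A r).ncard : ℚ))
    (hω : ∃ s : Fin p → ℕ, ∀ r : Fin p → ℕ, (∀ i, s i ≤ r i) →
      MvPolynomial.eval (fun i => (r i : ℚ)) ω =
        ((VSetBd (Sum.elim π π) ((rhoMap '' A) ∪ Set.range eBar) r).ncard : ℚ)) :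
    φ = ω := by
  obtain ⟨s, hs⟩ := hφ
  obtain ⟨t, ht⟩ := hω
  refine MvPolynomial.funext_set (fun i => (fun n : ℕ => (n : ℚ)) '' Set.Ici (max (s i) (t i)))
    (fun i => (Set.Ici_infinite _).image Nat.cast_injective.injOn) ?_
  intro x hx
  choose r hr hrx using fun i => hx i (Set.mem_univ i)
  obtain rfl : (fun i => (r i : ℚ)) = x := funext hrx
  rw [hs r fun i => (le_max_left _ _).trans (hr i), ht r fun i => (le_max_right _ _).trans (hr i),
    aux_image, Set.ncard_image_of_injective _ aux_inj]
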